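/- arXiv:2006.11869 — 6 statements merged into one kernel-verified Lean document; each statement's English description precedes it below -/
import Mathlib

section
/- For all reals 0 < ε < ε' < 1 and integers d, r ≥ 1, there exist a finite set Q and a Q-verifier 𝒱 of local horizon r + 1 such that A^d_{ε,r} ⊆ L_𝒱 ⊆ A^d_{ε',r}: every (ε,r)-uniform finite simple graph of maximum degree at most d admits a Q-proof accepted by 𝒱, and every finite simple graph of maximum degree at most d admitting a Q-proof accepted by 𝒱 is (ε',r)-uniform. -/
/-!
A proof names vertices by colours and writes measures down to finite precision. In a graph of
maximum degree at most `d` one can colour the vertices, with a number of colours depending only on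
`d` and `r`, so that no colour repeats in any ball of radius `r + 1` (`exists_rainbow_coloring`).
If `M` is large compared with `(d + 1) ^ r / (ε' - ε)`, the measures `f̃(x)` can be rounded to
multiples of `1 / M` on the same balls at an `ℓ¹` cost of at most `(ε' - ε) / 2` each
(`exists_rounding`). The label of `x` consists of its colour and the push-forward of its rounded
measure to the set of colours. The verifier `measureVerifier` checks that the colours in the ball of
radius `r + 1` are distinct, that the measure at the root is a probability measure on the colours of
its ball of radius `r`, and that it is `ε'`-close to the measures at the neighbours.

Pushing forward does not increase `ℓ¹` distances, so `(ε, r)`-uniform graphs are accepted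
(`exists_accepts`). Conversely, if `x` and `y` are adjacent, their balls of radius `r` both lie in
the ball of radius `r + 1` around `x`, where colours determine vertices; hence accepted measures on
colours pull back to measures on vertices without increasing `ℓ¹` distances
(`isUniform_of_accepts`).
-/

open scoped Classical symmDiff

noncomputable section

/-- The closed ball of radius `r` around `x` in the graph `G`. -/
def ballSet {V : Type*} (G : SimpleGraph V) (r : ℕ) (x : V) : Set V :=
  {z | G.edist x z ≤ r}

lemma self_mem_ballSet {V : Type*} (G : SimpleGraph V) (r : ℕ) (x : V) :
    x ∈ ballSet G r x := by
  simp [ballSet]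

/-- `G` has maximum degree at most `d`. -/
def DegLE {V : Type*} (G : SimpleGraph V) (d : ℕ) : Prop :=
  ∀ v, (G.neighborSet v).ncard ≤ d

/-- `N^d_r`: the maximum number of vertices of a ball of radius `r`
in a graph of maximum degree at most `d`. -/
def ballBound (d r : ℕ) : ℕ :=
  sSup {n | ∃ (W : Type) (_ : Fintype W) (G : SimpleGraph W) (x : W),
    DegLE G d ∧ n = (ballSet G r x).ncard}

/-- A `Q`-verifier: a predicate on rooted `Q`-labelled finite graphs. -/
def Verifier (Q : Type) : Type 1 :=
  ∀ (B : Type) [Fintype B], SimpleGraph B → B → (B → Q) → Prop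

/-- Invariance of a verifier under root- and label-preserving isomorphisms. -/
def Verifier.Inv {Q : Type} (𝒱 : Verifier Q) : Prop :=
  ∀ (B B' : Type) [Fintype B] [Fintype B'] (G : SimpleGraph B) (G' : SimpleGraph B')
    (φ : G ≃g G') (b : B) (ℓ' : B' → Q),
    𝒱 B G b (ℓ' ∘ φ) ↔ 𝒱 B' G' (φ b) ℓ'

/-- The verifier `𝒱` of local horizon `r` accepts the proof `T` on `G`:
for every vertex `x`, the `r`-neighbourhood of `x`, rooted at `x` and labelled by
(the restriction of) `T`, satisfies `𝒱`. -/
def Accepts {Q V : Type} [Fintype V] (𝒱 : Verifier Q) (r : ℕ)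
    (G : SimpleGraph V) (T : V → Q) : Prop :=
  ∀ x : V, 𝒱 ↥(ballSet G r x) (G.induce (ballSet G r x))
    ⟨x, self_mem_ballSet G r x⟩ (fun z => T z.1)

/-- `G` is `(ε,K)`-hyperfinite. -/
def IsHyperfinite {V : Type*} [Fintype V] (G : SimpleGraph V) (ε : ℝ) (K : ℕ) : Prop :=
  ∃ W ⊆ G.edgeSet, (W.ncard : ℝ) ≤ ε * (Nat.card V : ℝ) ∧
    ∀ v : V, (((G.deleteEdges W).connectedComponentMk v).supp).ncard ≤ K

/-- `G` is `(ε,r)`-uniform. -/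
def IsUniform {V : Type*} [Fintype V] (G : SimpleGraph V) (ε : ℝ) (r : ℕ) : Prop :=
  ∃ f : V → V → ℝ,
    (∀ x z, 0 ≤ f x z) ∧
    (∀ x, ∑ z, f x z = 1) ∧
    (∀ x y, G.Adj x y → ∑ z, |f x z - f y z| < ε) ∧
    (∀ x z, (r : ℕ∞) < G.edist x z → f x z = 0)

/-- A class of finite simple graphs. -/
def GraphClass : Type 1 := ∀ (V : Type) [Fintype V], SimpleGraph V → Prop

/-- `P` is monotone: closed under taking subgraphs. -/
def GraphClass.Mono (P : GraphClass) : Prop :=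
  ∀ (V W : Type) [Fintype V] [Fintype W] (G : SimpleGraph V) (H : SimpleGraph W)
    (f : W ↪ V), (∀ a b, H.Adj a b → G.Adj (f a) (f b)) → P V G → P W H

/-- `P` is closed under taking disjoint unions. -/
def GraphClass.ClosedUnderDisjUnion (P : GraphClass) : Prop :=
  ∀ (V W : Type) [Fintype V] [Fintype W] (G : SimpleGraph V) (H : SimpleGraph W),
    P V G → P W H → P (V ⊕ W) (G ⊕g H)

/-- `P` is hyperfinite. -/
def GraphClass.Hyperfinite (P : GraphClass) : Prop :=
  ∀ ε : ℝ, 0 < ε → ∃ K : ℕ, 1 ≤ K ∧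
    ∀ (V : Type) [Fintype V] (G : SimpleGraph V), P V G → IsHyperfinite G ε K

/-- The inner vertex boundary of `L` inside the subgraph of `G` induced on `S`:
vertices of `L` having a neighbour in `S \ L`. -/
def innerBoundary {V : Type*} (G : SimpleGraph V) (S L : Set V) : Set V :=
  {x ∈ L | ∃ y ∈ S \ L, G.Adj x y}

/-- The edge boundary of `L` in `F`: edges of `F` with exactly one endpoint in `L`. -/
def edgeBoundary {V : Type*} (F : SimpleGraph V) (L : Set V) : Set (Sym2 V) :=
  {e ∈ F.edgeSet | ∃ x ∈ L, ∃ y ∉ L, e = s(x, y)}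

/-- `Y` is a `K`-separator of `G`. -/
def IsSeparator {V : Type*} (G : SimpleGraph V) (K : ℕ) (Y : Set V) : Prop :=
  ∀ v : ↥(Yᶜ), ((((G.induce Yᶜ)).connectedComponentMk v).supp).ncard ≤ K

/-! ### Distances and balls -/

lemma edist_le_iff_exists_walk {V : Type*} (G : SimpleGraph V) (n : ℕ) (x z : V) :
    G.edist x z ≤ n ↔ ∃ w : G.Walk x z, w.length ≤ n := by
  constructor
  · intro h
    obtain ⟨w, hw⟩ := SimpleGraph.exists_walk_of_edist_ne_top
      (ne_top_of_le_ne_top (ENat.natCast_ne_top n) h)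
    exact ⟨w, by rw [← hw] at h; exact_mod_cast h⟩
  · rintro ⟨w, hw⟩
    exact (SimpleGraph.edist_le w).trans (by exact_mod_cast hw)

lemma edist_map_le {V W : Type*} {G : SimpleGraph V} {H : SimpleGraph W} (φ : G →g H)
    {n : ℕ} {x z : V} (h : G.edist x z ≤ n) : H.edist (φ x) (φ z) ≤ n := by
  obtain ⟨w, hw⟩ := (edist_le_iff_exists_walk G n x z).1 h
  exact (edist_le_iff_exists_walk H n _ _).2 ⟨w.map φ, by simpa using hw⟩

lemma ballSet_succ_subset {V : Type*} (G : SimpleGraph V) (n : ℕ) {x y : V} (h : G.Adj x y) :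
    ballSet G n y ⊆ ballSet G (n + 1) x := by
  intro z hz
  obtain ⟨w, hw⟩ := (edist_le_iff_exists_walk G n y z).1 hz
  exact (edist_le_iff_exists_walk G (n + 1) x z).2 ⟨.cons h w, by simpa using hw⟩

lemma ballSet_mono {V : Type*} (G : SimpleGraph V) {m n : ℕ} (h : m ≤ n) (x : V) :
    ballSet G m x ⊆ ballSet G n x :=
  fun _ hz => le_trans (show G.edist x _ ≤ m from hz) (by exact_mod_cast h)

/-- Distances up to `R` from the centre can be measured inside the ball of radius `R`, because
a geodesic from the centre stays in the ball. -/
lemma edist_induce_le {V : Type*} (G : SimpleGraph V) {n R : ℕ} (hn : n ≤ R) (x z : V)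
    (h : G.edist x z ≤ n) (hz : z ∈ ballSet G R x) :
    (G.induce (ballSet G R x)).edist ⟨x, self_mem_ballSet G R x⟩ ⟨z, hz⟩ ≤ n := by
  obtain ⟨w, hw⟩ := (edist_le_iff_exists_walk G n x z).1 h
  have hs : ∀ v ∈ w.support, v ∈ ballSet G R x := by
    intro v hv
    refine (edist_le_iff_exists_walk G R x v).2 ⟨w.takeUntil v hv, ?_⟩
    exact ((w.length_takeUntil_le_length hv).trans hw).trans hn
  refine (edist_le_iff_exists_walk _ n _ _).2 ⟨w.induce _ hs, ?_⟩
  have h1 := congrArg SimpleGraph.Walk.length (SimpleGraph.Walk.map_induce w hs)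
  rw [SimpleGraph.Walk.length_map] at h1
  exact h1.trans_le hw

lemma ballSet_ncard_le {V : Type*} [Fintype V] {G : SimpleGraph V} {d : ℕ} (hG : DegLE G d)
    (n : ℕ) (x : V) : (ballSet G n x).ncard ≤ (d + 1) ^ n := by
  induction n generalizing x with
  | zero =>
    have : ballSet G 0 x = {x} := by
      ext z
      simp [ballSet, eq_comm (a := z)]
    simp [this]
  | succ n ih =>
    have hsub : (ballSet G (n + 1) x).toFinset ⊆
        (insert x (G.neighborSet x)).toFinset.biUnion fun y => (ballSet G n y).toFinset := by
      intro z hz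
      rw [Set.mem_toFinset] at hz
      obtain ⟨w, hw⟩ := (edist_le_iff_exists_walk G (n + 1) x z).1 hz
      rw [Finset.mem_biUnion]
      cases w with
      | nil => exact ⟨x, by simp, by simpa using self_mem_ballSet G n x⟩
      | @cons _ y _ h p =>
        refine ⟨y, by simp [h], ?_⟩
        rw [Set.mem_toFinset]
        exact (edist_le_iff_exists_walk G n y z).2 ⟨p, by simpa using hw⟩
    have h1 : (insert x (G.neighborSet x)).toFinset.card ≤ d + 1 := by
      rw [← Set.ncard_eq_toFinset_card']
      exact (Set.ncard_insert_le _ _).trans (Nat.add_le_add_right (hG x) 1)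
    rw [Set.ncard_eq_toFinset_card']
    calc _ ≤ _ := Finset.card_le_card hsub
      _ ≤ _ := Finset.card_biUnion_le_card_mul _ _ ((d + 1) ^ n) fun y _ => by
          rw [← Set.ncard_eq_toFinset_card']
          exact ih y
      _ ≤ (d + 1) * (d + 1) ^ n := Nat.mul_le_mul_right _ h1
      _ = _ := by ring

/-! ### Greedy colouring -/

lemma exists_greedy_coloring {V : Type*} [Fintype V] (R : V → V → Prop)
    (hR : ∀ u v, R u v → R v u) (K : ℕ) (hK : ∀ u, {v | R u v}.ncard ≤ K) :
    ∃ c : V → Fin (K + 1), ∀ u v, u ≠ v → R u v → c u ≠ c v := by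
  suffices h : ∀ S : Finset V, ∃ c : V → Fin (K + 1),
      ∀ u ∈ S, ∀ v ∈ S, u ≠ v → R u v → c u ≠ c v by
    obtain ⟨c, hc⟩ := h Finset.univ
    exact ⟨c, fun u v => hc u (Finset.mem_univ _) v (Finset.mem_univ _)⟩
  intro S
  induction S using Finset.induction_on with
  | empty => exact ⟨fun _ => 0, by simp⟩
  | insert a S ha ih =>
    obtain ⟨c, hc⟩ := ih
    -- Some colour is free for `a`, as its at most `K` related vertices use at most `K` colours.
    obtain ⟨k, hk⟩ : ∃ k, k ∉ {v | R a v}.toFinset.image c := by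
      by_contra! hall
      have h1 : Fintype.card (Fin (K + 1)) ≤ ({v | R a v}.toFinset.image c).card := by
        rw [← Finset.card_univ]
        exact Finset.card_le_card fun k _ => hall k
      have h2 := h1.trans Finset.card_image_le
      rw [← Set.ncard_eq_toFinset_card', Fintype.card_fin] at h2
      have := hK a
      omega
    have hk' : ∀ v, R a v → c v ≠ k := fun v hv hvk =>
      hk (Finset.mem_image.2 ⟨v, by simpa using hv, hvk⟩)
    refine ⟨Function.update c a k, fun u hu v hv huv hRuv => ?_⟩
    by_cases hua : u = a
    · subst hua
      rw [Function.update_self, Function.update_of_ne huv.symm]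
      exact (hk' v hRuv).symm
    · rw [Function.update_of_ne hua]
      by_cases hva : v = a
      · subst hva
        rw [Function.update_self]
        exact hk' u (hR _ _ hRuv)
      · rw [Function.update_of_ne hva]
        exact hc u ((Finset.mem_insert.1 hu).resolve_left hua) v
          ((Finset.mem_insert.1 hv).resolve_left hva) huv hRuv

/-- A graph of maximum degree at most `d` has a colouring, with a number of colours depending only
on `d` and `R`, in which every ball of radius `R` is rainbow. -/
lemma exists_rainbow_coloring {V : Type*} [Fintype V] {G : SimpleGraph V} {d : ℕ}
    (hG : DegLE G d) (R : ℕ) :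
    ∃ c : V → Fin ((d + 1) ^ (R + R) + 1), ∀ x, Set.InjOn c (ballSet G R x) := by
  obtain ⟨c, hc⟩ := exists_greedy_coloring (fun u v => v ∈ ballSet G (R + R) u)
    (fun u v h => by
      show G.edist v u ≤ _
      rw [SimpleGraph.edist_comm]
      exact h) _ (ballSet_ncard_le hG (R + R))
  refine ⟨c, fun x u hu v hv huv => ?_⟩
  by_contra hne
  refine hc u v hne ?_ huv
  have h1 : G.edist u x ≤ R := by
    rw [SimpleGraph.edist_comm]
    exact hu
  have h2 : G.edist x v ≤ R := hv
  show G.edist u v ≤ _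
  push_cast
  exact SimpleGraph.edist_triangle.trans (add_le_add h1 h2)

/-! ### Rounding probability measures -/

/-- A probability measure supported on `S` is within `2 |S| / M` in `ℓ¹` of one with values in
`(1 / M) ℤ` and the same support bound. -/
lemma exists_rounding {V : Type*} [Fintype V] (f : V → ℝ) (hf : ∀ z, 0 ≤ f z)
    (hsum : ∑ z, f z = 1) (S : Finset V) (x : V) (hx : x ∈ S) (hS : ∀ z ∉ S, f z = 0) (M : ℕ) :
    ∃ m : V → ℕ, ∑ z, m z = M ∧ (∀ z ∉ S, m z = 0) ∧
      ∑ z, |(m z : ℝ) - M * f z| ≤ 2 * S.card := by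
  have hnn : ∀ z, 0 ≤ (M : ℝ) * f z := fun z => mul_nonneg (Nat.cast_nonneg _) (hf z)
  have hMsum : ∑ z, (M : ℝ) * f z = M := by rw [← Finset.mul_sum, hsum, mul_one]
  have hle : ∑ z, ⌊(M : ℝ) * f z⌋₊ ≤ M := by
    have : ((∑ z, ⌊(M : ℝ) * f z⌋₊ : ℕ) : ℝ) ≤ M := by
      push_cast
      exact (Finset.sum_le_sum fun z _ => Nat.floor_le (hnn z)).trans_eq hMsum
    exact_mod_cast this
  -- Round down, and return the mass lost to the point `x`.
  obtain ⟨D, hD⟩ := Nat.exists_eq_add_of_le hle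
  have hDr : (D : ℝ) = ∑ z, ((M : ℝ) * f z - ⌊(M : ℝ) * f z⌋₊) := by
    have : (M : ℝ) = ∑ z, (⌊(M : ℝ) * f z⌋₊ : ℝ) + D := by exact_mod_cast hD
    rw [Finset.sum_sub_distrib, hMsum]
    linarith
  have hDS : (D : ℝ) ≤ S.card := by
    rw [hDr, ← Finset.sum_subset (Finset.subset_univ S) fun z _ hz => by simp [hS z hz]]
    calc _ ≤ ∑ z ∈ S, (1 : ℝ) := Finset.sum_le_sum fun z _ => by
            linarith [Nat.lt_floor_add_one ((M : ℝ) * f z)]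
      _ = _ := by simp
  refine ⟨fun z => ⌊(M : ℝ) * f z⌋₊ + if z = x then D else 0, ?_, ?_, ?_⟩
  · rw [Finset.sum_add_distrib, Finset.sum_ite_eq' Finset.univ x]
    simpa using hD.symm
  · intro z hz
    have : z ≠ x := fun h => hz (h ▸ hx)
    simp [hS z hz, this]
  · calc _ ≤ ∑ z, (((M : ℝ) * f z - ⌊(M : ℝ) * f z⌋₊) + if z = x then (D : ℝ) else 0) := by
          refine Finset.sum_le_sum fun z _ => ?_
          have h1 := Nat.floor_le (hnn z)
          have h2 : (0 : ℝ) ≤ if z = x then (D : ℝ) else 0 := by split_ifs <;> simp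
          push_cast
          rw [abs_le]
          constructor <;> linarith
      _ = D + D := by
          rw [Finset.sum_add_distrib, ← hDr, Finset.sum_ite_eq' Finset.univ x]
          simp
      _ ≤ _ := by linarith

/-! ### The verifier -/

/-- A label is a colour together with a function on colours with values `0, …, M`; the function
at the root, divided by `M`, is meant as a probability measure on the ball of radius `r` around it,
a vertex being named by its colour. The verifier checks that no colour repeats in the
neighbourhood, that the function at the root has total mass `M` and lives on colours of vertices at
distance at most `r`, and that it is within `ε M` in `ℓ¹` of the functions at the neighbours. -/
def measureVerifier (k M : ℕ) (ε : ℝ) (r : ℕ) : Verifier (Fin k × (Fin k → Fin (M + 1))) :=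
  fun _ _ G b ℓ =>
    (∀ u v, (ℓ u).1 = (ℓ v).1 → u = v) ∧
    (∀ c, ((ℓ b).2 c : ℕ) ≠ 0 → ∃ z, G.edist b z ≤ r ∧ (ℓ z).1 = c) ∧
    ∑ c, ((ℓ b).2 c : ℕ) = M ∧
    ∀ y, G.Adj b y → ∑ c, |(((ℓ b).2 c : ℕ) : ℝ) - (((ℓ y).2 c : ℕ) : ℝ)| < ε * M

lemma measureVerifier_inv (k M : ℕ) (ε : ℝ) (r : ℕ) : (measureVerifier k M ε r).Inv := by
  have key : ∀ (B B' : Type) [Fintype B] [Fintype B'] (G : SimpleGraph B) (G' : SimpleGraph B')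
      (φ : G ≃g G') (b : B) (ℓ' : B' → _),
      measureVerifier k M ε r B G b (ℓ' ∘ φ) → measureVerifier k M ε r B' G' (φ b) ℓ' := by
    intro B B' _ _ G G' φ b ℓ' ⟨h1, h2, h3, h4⟩
    refine ⟨fun u v huv => ?_, fun c hc => ?_, h3, fun y hy => ?_⟩
    · have := h1 (φ.symm u) (φ.symm v) (by simpa using huv)
      exact φ.symm.injective this
    · obtain ⟨z, hz, hzc⟩ := h2 c hc
      exact ⟨φ z, edist_map_le φ.toHom hz, hzc⟩
    · have := h4 (φ.symm y) (by rw [← φ.map_adj_iff]; simpa using hy)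
      simpa using this
  intro B B' _ _ G G' φ b ℓ'
  refine ⟨key B B' G G' φ b ℓ', fun h => ?_⟩
  have hℓ : (ℓ' ∘ φ) ∘ φ.symm = ℓ' := by
    ext1 z
    simp
  have := key B' B G' G φ.symm (φ b) (ℓ' ∘ φ) (by rwa [hℓ])
  simpa using this

/-- Completeness: the rounded measures, pushed forward along a colouring that is rainbow on balls,
form an accepted proof. The hypothesis on `M` says that the rounding costs at most `ε' - ε`. -/
lemma exists_accepts {V : Type} [Fintype V] {G : SimpleGraph V} {d r M : ℕ} {ε ε' : ℝ}
    (hM0 : 0 < M) (hM : 4 * ((d + 1) ^ r : ℕ) ≤ (ε' - ε) * M) (hG : DegLE G d)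
    (hU : IsUniform G ε r) :
    ∃ T, Accepts (measureVerifier ((d + 1) ^ ((r + 1) + (r + 1)) + 1) M ε' r) (r + 1) G T := by
  obtain ⟨f, hf0, hf1, hf2, hf3⟩ := hU
  obtain ⟨c, hc⟩ := exists_rainbow_coloring hG (r + 1)
  have hround : ∀ x, ∃ m : V → ℕ, ∑ z, m z = M ∧ (∀ z ∉ (ballSet G r x).toFinset, m z = 0) ∧
      ∑ z, |(m z : ℝ) - M * f x z| ≤ 2 * ((d + 1) ^ r : ℕ) := by
    intro x
    obtain ⟨m, h1, h2, h3⟩ := exists_rounding (f x) (hf0 x) (hf1 x) (ballSet G r x).toFinset x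
      (by simpa using self_mem_ballSet G r x)
      (fun z hz => hf3 x z (not_le.1 fun h => hz (Set.mem_toFinset.2 h))) M
    refine ⟨m, h1, h2, h3.trans ?_⟩
    have := ballSet_ncard_le hG r x
    rw [Set.ncard_eq_toFinset_card'] at this
    have h : (((ballSet G r x).toFinset.card : ℕ) : ℝ) ≤ ((d + 1) ^ r : ℕ) := by
      exact_mod_cast this
    linarith
  choose m hm1 hm2 hm3 using hround
  have hfib : ∀ x k, ∑ z with c z = k, m x z < M + 1 := fun x k => by
    rw [Nat.lt_succ_iff, ← hm1 x]
    exact Finset.sum_le_sum_of_subset (Finset.filter_subset _ _)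
  refine ⟨fun x => (c x, fun k => ⟨∑ z with c z = k, m x z, hfib x k⟩), fun x => ⟨?_, ?_, ?_, ?_⟩⟩
  · rintro ⟨u, hu⟩ ⟨v, hv⟩ huv
    exact Subtype.ext (hc x hu hv huv)
  · intro k hk
    obtain ⟨z, hz, hmz⟩ := Finset.exists_ne_zero_of_sum_ne_zero hk
    have hzr : z ∈ ballSet G r x := by
      by_contra h
      exact hmz (hm2 x z (by simpa using h))
    exact ⟨⟨z, ballSet_mono G r.le_succ x hzr⟩, edist_induce_le G r.le_succ x z hzr _,
      (Finset.mem_filter.1 hz).2⟩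
  · show ∑ k, ∑ z with c z = k, m x z = M
    rw [Finset.sum_fiberwise, hm1]
  · rintro ⟨y, hy⟩ hxy
    have hadj : G.Adj x y := hxy
    show ∑ k, |((∑ z with c z = k, m x z : ℕ) : ℝ) - ((∑ z with c z = k, m y z : ℕ) : ℝ)| < ε' * M
    have hM' : (0 : ℝ) < M := by exact_mod_cast hM0
    calc _ ≤ ∑ k, ∑ z with c z = k, |(m x z : ℝ) - m y z| := by
          refine Finset.sum_le_sum fun k _ => ?_
          push_cast
          rw [← Finset.sum_sub_distrib]
          exact Finset.abs_sum_le_sum_abs _ _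
      _ = ∑ z, |(m x z : ℝ) - m y z| := Finset.sum_fiberwise _ _ _
      _ ≤ ∑ z, (|(m x z : ℝ) - M * f x z| + M * |f x z - f y z| + |(m y z : ℝ) - M * f y z|) := by
          refine Finset.sum_le_sum fun z _ => ?_
          have h1 : (m x z : ℝ) - m y z = ((m x z : ℝ) - M * f x z) + M * (f x z - f y z)
              - ((m y z : ℝ) - M * f y z) := by ring
          rw [h1, ← abs_of_pos hM', ← abs_mul, abs_of_pos hM']
          exact (abs_sub _ _).trans (add_le_add_left (abs_add_le _ _) _)
      _ = ∑ z, |(m x z : ℝ) - M * f x z| + M * ∑ z, |f x z - f y z|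
          + ∑ z, |(m y z : ℝ) - M * f y z| := by
          rw [Finset.sum_add_distrib, Finset.sum_add_distrib, Finset.mul_sum]
      _ < ε' * M := by
          have := mul_lt_mul_of_pos_left (hf2 x y hadj) hM'
          have := hm3 x
          have := hm3 y
          linarith

/-- Soundness: an accepted proof is decoded by reading, at `x`, the mass of each vertex of the ball
of radius `r` off its colour. -/
lemma isUniform_of_accepts {V : Type} [Fintype V] {G : SimpleGraph V} {k M r : ℕ} {ε : ℝ}
    (hM0 : 0 < M) (T : V → Fin k × (Fin k → Fin (M + 1)))
    (hT : Accepts (measureVerifier k M ε r) (r + 1) G T) : IsUniform G ε r := by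
  have hM' : (0 : ℝ) < M := by exact_mod_cast hM0
  have hinj : ∀ x, ∀ u ∈ ballSet G (r + 1) x, ∀ v ∈ ballSet G (r + 1) x,
      (T u).1 = (T v).1 → u = v := fun x u hu v hv h =>
    congrArg Subtype.val ((hT x).1 ⟨u, hu⟩ ⟨v, hv⟩ h)
  have hsupp : ∀ x c, ((T x).2 c : ℕ) ≠ 0 → ∃ z ∈ ballSet G r x, (T z).1 = c := by
    intro x c hc
    obtain ⟨z, hz, hzc⟩ := (hT x).2.1 c hc
    exact ⟨z.1, edist_map_le (SimpleGraph.Embedding.induce _).toHom hz, hzc⟩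
  have hsum : ∀ x, ∑ c, ((T x).2 c : ℕ) = M := fun x => (hT x).2.2.1
  have hvar : ∀ x y, G.Adj x y →
      ∑ c, |(((T x).2 c : ℕ) : ℝ) - (((T y).2 c : ℕ) : ℝ)| < ε * M := fun x y h =>
    (hT x).2.2.2 ⟨y, ballSet_succ_subset G r h (self_mem_ballSet G r y)⟩ h
  have hball : ∀ x, ballSet G r x ⊆ ballSet G (r + 1) x := ballSet_mono G r.le_succ
  -- Off the ball of radius `r` around `y`, a vertex seen together with that ball by some `x` has a
  -- colour of zero mass at `y`, so the cut-off in the decoding is invisible from `x`.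
  have hcut : ∀ x y, ballSet G r y ⊆ ballSet G (r + 1) x → ∀ z ∈ ballSet G (r + 1) x,
      (if z ∈ ballSet G r y then (((T y).2 (T z).1 : ℕ) : ℝ) / M else 0)
        = (((T y).2 (T z).1 : ℕ) : ℝ) / M := by
    intro x y hyx z hz
    split_ifs with h
    · rfl
    · by_cases h0 : ((T y).2 (T z).1 : ℕ) = 0
      · simp [h0]
      · obtain ⟨w, hw, hwz⟩ := hsupp y _ h0
        exact absurd (hinj x w (hyx hw) z hz hwz ▸ hw) h
  refine ⟨fun x z => if z ∈ ballSet G r x then (((T x).2 (T z).1 : ℕ) : ℝ) / M else 0,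
    fun x z => ?_, fun x => ?_, fun x y hxy => ?_, fun x z hz => ?_⟩
  · dsimp only
    split_ifs <;> positivity
  · dsimp only
    have h1 : ∑ z ∈ (ballSet G r x).toFinset, ((T x).2 (T z).1 : ℕ) = M := by
      rw [← Finset.sum_image (s := (ballSet G r x).toFinset) (g := fun z => (T z).1)
        (f := fun c => ((T x).2 c : ℕ))]
      · refine Eq.trans ?_ (hsum x)
        refine Finset.sum_subset (Finset.subset_univ _) fun c _ hc => ?_
        by_contra h0
        obtain ⟨z, hz, hzc⟩ := hsupp x c h0
        exact hc (Finset.mem_image.2 ⟨z, by simpa using hz, hzc⟩)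
      · intro u hu v hv
        exact hinj x u (hball x (by simpa using hu)) v (hball x (by simpa using hv))
    rw [← Finset.sum_filter, ← Finset.sum_div, div_eq_one_iff_eq hM'.ne', ← Nat.cast_sum]
    norm_cast
    convert h1 using 2
    ext z
    simp
  · dsimp only
    have hyx := ballSet_succ_subset G r hxy
    rw [← Finset.sum_subset (Finset.subset_univ (ballSet G (r + 1) x).toFinset)]
    · calc _ = ∑ z ∈ (ballSet G (r + 1) x).toFinset,
            |(((T x).2 (T z).1 : ℕ) : ℝ) - (((T y).2 (T z).1 : ℕ) : ℝ)| / M := by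
            refine Finset.sum_congr rfl fun z hz => ?_
            rw [Set.mem_toFinset] at hz
            rw [hcut x x (hball x) z hz, hcut x y hyx z hz, ← sub_div, abs_div, abs_of_pos hM']
        _ = (∑ c ∈ (ballSet G (r + 1) x).toFinset.image fun z => (T z).1,
            |(((T x).2 c : ℕ) : ℝ) - (((T y).2 c : ℕ) : ℝ)|) / M := by
            rw [Finset.sum_image, Finset.sum_div]
            intro u hu v hv
            exact hinj x u (by simpa using hu) v (by simpa using hv)
        _ ≤ (∑ c, |(((T x).2 c : ℕ) : ℝ) - (((T y).2 c : ℕ) : ℝ)|) / M := by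
            gcongr
            exact Finset.subset_univ _
        _ < ε := by
            rw [div_lt_iff₀ hM']
            exact hvar x y hxy
    · intro z _ hz
      rw [Set.mem_toFinset] at hz
      rw [if_neg fun h => hz (hball x h), if_neg fun h => hz (hyx h)]
      simp
  · have : z ∉ ballSet G r x := not_le.2 hz
    simp [this]

/-- `A^d_{ε,r}` can be verified by a PLS in constant time relative to `A^d_{ε',r}`. -/
theorem uniform_relative_PLS (ε ε' : ℝ) (hε : 0 < ε) (hεε' : ε < ε') (hε' : ε' < 1)
    (d r : ℕ) (hd : 1 ≤ d) (hr : 1 ≤ r) :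
    ∃ (Q : Type) (_ : Finite Q) (𝒱 : Verifier Q), 𝒱.Inv ∧
      (∀ (V : Type) [Fintype V] (G : SimpleGraph V), DegLE G d → IsUniform G ε r →
        ∃ T : V → Q, Accepts 𝒱 (r + 1) G T) ∧
      (∀ (V : Type) [Fintype V] (G : SimpleGraph V), DegLE G d →
        (∃ T : V → Q, Accepts 𝒱 (r + 1) G T) → IsUniform G ε' r) := by
  -- The rounding precision: each of two neighbouring measures is rounded at cost `2 (d + 1) ^ r`.
  obtain ⟨M, hM⟩ := exists_nat_gt (4 * (((d + 1) ^ r : ℕ) : ℝ) / (ε' - ε))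
  have hδ : 0 < ε' - ε := sub_pos.2 hεε'
  have hM0 : 0 < M := by
    have : (0 : ℝ) < M := lt_of_le_of_lt (by positivity) hM
    exact_mod_cast this
  have hM' : 4 * (((d + 1) ^ r : ℕ) : ℝ) ≤ (ε' - ε) * M := by
    rw [div_lt_iff₀ hδ] at hM
    linarith
  exact ⟨_, inferInstance, measureVerifier ((d + 1) ^ ((r + 1) + (r + 1)) + 1) M ε' r,
    measureVerifier_inv _ _ _ _, fun V _ G hG hU => exists_accepts hM0 hM' hG hU,
    fun V _ G _ ⟨T, hT⟩ => isUniform_of_accepts hM0 T hT⟩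

end
end

section
/- Let 0 < ε < ε' < 1, let d, r ≥ 1 be integers, let α be a positive integer with α > 3·N^d_r/(ε' − ε), and let G be an (ε,r)-uniform finite simple graph of maximum degree at most d. Then there exists a function g̃ assigning to each vertex x ∈ V(G) a probability measure g̃(x) on V(G) such that (i) for all x, z ∈ V(G) there is an integer 0 ≤ i ≤ α with g̃(x)(z) = i/α, (ii) ‖g̃(x) − g̃(y)‖₁ < ε' for every pair of adjacent vertices x, y, and (iii) g̃(x)(z) = 0 whenever d_G(x,z) > r. -/
/-!
Fix a vertex `x` and enumerate `V(G)`. Rounding the partial sums of `α • f x` down to integers and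
taking consecutive differences gives nonnegative integers `k x z` that sum to `α` and differ from
`α * f x z` by strictly less than `1` (`exists_rounding`). The strict inequality forces `k x z = 0`
wherever `f x z = 0`, so `k x` is still supported in the `r`-ball around `x`, and only the at most
`N^d_r` vertices of that ball contribute to the rounding error. Hence `g x z = k x z / α` satisfies
`‖g x - f x‖₁ ≤ N^d_r / α`, and the triangle inequality gives
`‖g x - g y‖₁ < ε + 2 N^d_r / α ≤ ε'` on every edge.

As `N^d_r` is encoded as a supremum of natural numbers, it bounds ball sizes only once these are
known to be bounded uniformly; `ncard_ballSet_le` provides the bound `(d + 1) ^ r`.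
-/
open scoped Classical symmDiff

noncomputable section

/-- Integer rounding that preserves the (rounded) total: the sequence of rounded values is the
sequence of differences of the floors of the partial sums of `f`. -/
lemma exists_rounding_s4 {V : Type*} (f : V → ℝ) (hf : ∀ z, 0 ≤ f z) (s : Finset V) :
    ∃ k : V → ℕ, (∑ z ∈ s, k z = ⌊∑ z ∈ s, f z⌋₊) ∧ ∀ z ∈ s, |(k z : ℝ) - f z| < 1 := by
  induction s using Finset.induction_on with
  | empty => exact ⟨fun _ => 0, by simp, by simp⟩
  | insert a s ha ih =>
    obtain ⟨k, hk, hkf⟩ := ih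
    have hS : 0 ≤ ∑ z ∈ s, f z := Finset.sum_nonneg fun z _ => hf z
    rw [Finset.sum_insert ha]
    set S := ∑ z ∈ s, f z
    have hmono : ⌊S⌋₊ ≤ ⌊f a + S⌋₊ := Nat.floor_mono (by linarith [hf a])
    have hne : ∀ z ∈ s, z ≠ a := fun z hz h => ha (h ▸ hz)
    refine ⟨Function.update k a (⌊f a + S⌋₊ - ⌊S⌋₊), ?_, ?_⟩
    · rw [Finset.sum_insert ha, Function.update_self,
        Finset.sum_congr rfl fun z hz => Function.update_of_ne (hne z hz) _ _, hk]
      omega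
    · intro z hz
      rcases Finset.mem_insert.1 hz with rfl | hz
      · rw [Function.update_self, Nat.cast_sub hmono, abs_lt]
        have h1 := Nat.floor_le hS
        have h2 := Nat.lt_floor_add_one S
        have h3 := Nat.floor_le (add_nonneg (hf z) hS)
        have h4 := Nat.lt_floor_add_one (f z + S)
        constructor <;> linarith
      · rw [Function.update_of_ne (hne z hz)]
        exact hkf z hz

lemma ncard_ballSet_le {V : Type*} [Fintype V] (G : SimpleGraph V) {d : ℕ} (hG : DegLE G d)
    (r : ℕ) (x : V) : (ballSet G r x).ncard ≤ (d + 1) ^ r := by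
  induction r generalizing x with
  | zero =>
    have : ballSet G 0 x = {x} := by
      ext z
      simp [ballSet, eq_comm (a := x)]
    simp [this]
  | succ r ih =>
    -- A walk of length at most `r + 1` from `x` is trivial or starts with a step to a neighbour.
    have hsub : ballSet G (r + 1) x ⊆
        {x} ∪ ⋃ y ∈ (G.neighborSet x).toFinset, ballSet G r y := by
      intro z hz
      have hz' : G.edist x z ≤ ((r + 1 : ℕ) : ℕ∞) := hz
      have hne : G.edist x z ≠ ⊤ := ne_top_of_le_ne_top (ENat.natCast_ne_top _) hz'
      obtain ⟨p, hp⟩ := SimpleGraph.exists_walk_of_edist_ne_top hne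
      rw [← hp] at hz'
      have hl : p.length ≤ r + 1 := by exact_mod_cast hz'
      cases p with
      | nil => exact Or.inl rfl
      | @cons _ y _ hadj q =>
        right
        simp only [Set.mem_iUnion]
        refine ⟨y, by simpa using hadj, ?_⟩
        rw [SimpleGraph.Walk.length_cons] at hl
        have hq : q.length ≤ r := by omega
        exact (SimpleGraph.edist_le q).trans (by exact_mod_cast hq)
    have hdeg : (G.neighborSet x).toFinset.card ≤ d := by
      rw [← Set.ncard_eq_toFinset_card']
      exact hG x
    calc (ballSet G (r + 1) x).ncard
        ≤ ({x} ∪ ⋃ y ∈ (G.neighborSet x).toFinset, ballSet G r y).ncard :=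
          Set.ncard_le_ncard hsub (Set.toFinite _)
      _ ≤ 1 + ∑ y ∈ (G.neighborSet x).toFinset, (ballSet G r y).ncard := by
          refine (Set.ncard_union_le _ _).trans ?_
          rw [Set.ncard_singleton]
          exact Nat.add_le_add_left (Finset.set_ncard_biUnion_le _ _) 1
      _ ≤ 1 + (G.neighborSet x).toFinset.card * (d + 1) ^ r := by
          gcongr
          exact Finset.sum_le_card_nsmul _ _ _ fun y _ => ih y
      _ ≤ (d + 1) ^ r + d * (d + 1) ^ r := by
          gcongr
          exact Nat.one_le_pow _ _ (Nat.succ_pos d)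
      _ = (d + 1) ^ (r + 1) := by ring

lemma ncard_ballSet_le_ballBound {V : Type} [Fintype V] (G : SimpleGraph V) {d : ℕ}
    (hG : DegLE G d) (r : ℕ) (x : V) : (ballSet G r x).ncard ≤ ballBound d r := by
  refine le_csSup ⟨(d + 1) ^ r, ?_⟩ ⟨V, inferInstance, G, x, hG, rfl⟩
  rintro n ⟨W, _, H, w, hH, rfl⟩
  exact ncard_ballSet_le H hH r w

/-- Discretized witness of uniformity. -/
theorem discretized_uniformity (ε ε' : ℝ) (hε : 0 < ε) (hεε' : ε < ε') (hε' : ε' < 1)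
    (d r : ℕ) (hd : 1 ≤ d) (hr : 1 ≤ r)
    (α : ℕ) (hα : 0 < α)
    (hαbig : (3 * (ballBound d r : ℝ)) / (ε' - ε) < (α : ℝ))
    (V : Type) [Fintype V] (G : SimpleGraph V) (hG : DegLE G d)
    (hunif : IsUniform G ε r) :
    ∃ g : V → V → ℝ,
      (∀ x z, 0 ≤ g x z) ∧
      (∀ x, ∑ z, g x z = 1) ∧
      (∀ x z, ∃ i : ℕ, i ≤ α ∧ g x z = (i : ℝ) / (α : ℝ)) ∧
      (∀ x y, G.Adj x y → ∑ z, |g x z - g y z| < ε') ∧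
      (∀ x z, (r : ℕ∞) < G.edist x z → g x z = 0) := by
  obtain ⟨f, hf0, hf1, hfε, hfr⟩ := hunif
  have hα' : (0 : ℝ) < α := by exact_mod_cast hα
  have hround : ∀ x, ∃ k : V → ℕ, ∑ z, k z = α ∧ ∀ z, |(k z : ℝ) - α * f x z| < 1 := by
    intro x
    obtain ⟨k, hk, hkf⟩ := exists_rounding_s4 (fun z => (α : ℝ) * f x z)
      (fun z => mul_nonneg hα'.le (hf0 x z)) Finset.univ
    refine ⟨k, ?_, fun z => hkf z (Finset.mem_univ z)⟩
    rw [hk, ← Finset.mul_sum, hf1 x, mul_one, Nat.floor_natCast]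
  choose k hk hkf using hround
  have hk0 : ∀ x z, (r : ℕ∞) < G.edist x z → k x z = 0 := by
    intro x z hz
    have h := hkf x z
    rw [hfr x z hz, mul_zero, sub_zero, Nat.abs_cast] at h
    exact_mod_cast Nat.lt_one_iff.1 (by exact_mod_cast h)
  have herr : ∀ x, ∑ z, |(k x z : ℝ) / α - f x z| ≤ ballBound d r / α := by
    intro x
    have hpt : ∀ z, |(k x z : ℝ) / α - f x z| ≤ if z ∈ ballSet G r x then 1 / (α : ℝ) else 0 := by
      intro z
      split_ifs with hz
      · have : (k x z : ℝ) / α - f x z = (k x z - α * f x z) / α := by field_simp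
        rw [this, abs_div, abs_of_pos hα']
        gcongr
        exact (hkf x z).le
      · have hz' : (r : ℕ∞) < G.edist x z := not_le.1 hz
        simp [hk0 x z hz', hfr x z hz']
    calc ∑ z, |(k x z : ℝ) / α - f x z|
        ≤ ∑ z, if z ∈ ballSet G r x then 1 / (α : ℝ) else 0 := Finset.sum_le_sum fun z _ => hpt z
      _ = (ballSet G r x).ncard / α := by
          rw [← Finset.sum_filter, Finset.sum_const, nsmul_eq_mul, mul_one_div,
            Set.ncard_eq_toFinset_card', Set.toFinset]
          congr 3
          ext z
          simp
      _ ≤ ballBound d r / α := by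
          gcongr
          exact ncard_ballSet_le_ballBound G hG r x
  refine ⟨fun x z => (k x z : ℝ) / α, fun x z => by positivity, ?_, ?_, ?_, ?_⟩
  · intro x
    rw [← Finset.sum_div, ← Nat.cast_sum, hk x, div_self hα'.ne']
  · intro x z
    refine ⟨k x z, ?_, rfl⟩
    rw [← hk x]
    exact Finset.single_le_sum (f := k x) (fun _ _ => Nat.zero_le _) (Finset.mem_univ z)
  · intro x y hxy
    have htri : ∑ z, |(k x z : ℝ) / α - (k y z : ℝ) / α| ≤
        ∑ z, |(k x z : ℝ) / α - f x z| + ∑ z, |f x z - f y z| +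
          ∑ z, |(k y z : ℝ) / α - f y z| := by
      rw [← Finset.sum_add_distrib, ← Finset.sum_add_distrib]
      refine Finset.sum_le_sum fun z _ => ?_
      rw [abs_sub_comm ((k y z : ℝ) / α)]
      exact (abs_sub_le _ (f y z) _).trans (add_le_add_left (abs_sub_le _ (f x z) _) _)
    have hbig : 3 * ((ballBound d r : ℝ) / α) < ε' - ε := by
      rw [← mul_div_assoc, div_lt_comm₀ hα' (sub_pos.2 hεε')]
      exact hαbig
    have hB : 0 ≤ (ballBound d r : ℝ) / α := by positivity
    linarith [herr x, herr y, hfε x y hxy]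
  · intro x z hz
    simp [hk0 x z hz]

end
end

section
/- Let G be an (ε,r)-uniform finite simple graph of maximum degree at most d, and let F be the subgraph of G induced on a nonempty subset S ⊆ V(G). Then F is (ε,2r)-uniform relative to G: there exists a function f̃ assigning to each x ∈ S a probability measure f̃(x) on S (a nonnegative function on S summing to 1) such that ‖f̃(x) − f̃(y)‖₁ ≤ ε for every pair of vertices x, y ∈ S adjacent in F, and f̃(x)(z) = 0 whenever the distance in G satisfies d_G(x,z) > 2r. -/
/-!
Let `π : V → S` send each vertex to a nearest point of `S` in the metric of `G`, and push the
measures `f x`, for `x ∈ S`, forward along `π`. Pushing forward preserves nonnegativity and total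
mass and does not increase the `ℓ¹`-distance. If `f x w ≠ 0` then `d(x, w) ≤ r`, and since `x`
itself lies in `S`, also `d(w, π w) ≤ d(w, x) ≤ r`; hence the pushforward is supported within
distance `2r` of `x`.
-/

open scoped Classical symmDiff

noncomputable section

/-- An induced subgraph of an `(ε,r)`-uniform graph is `(ε,2r)`-uniform relative
to the ambient graph. -/
theorem induced_relatively_uniform (ε : ℝ) (hε : 0 < ε) (d r : ℕ) (hd : 1 ≤ d)
    (hr : 1 ≤ r) (V : Type) [Fintype V] (G : SimpleGraph V) (hG : DegLE G d)
    (hunif : IsUniform G ε r) (S : Set V) (hS : S.Nonempty) :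
    ∃ f : ↥S → ↥S → ℝ,
      (∀ x z, 0 ≤ f x z) ∧
      (∀ x, ∑ z, f x z = 1) ∧
      (∀ x y, (G.induce S).Adj x y → ∑ z, |f x z - f y z| ≤ ε) ∧
      (∀ x z, ((2 * r : ℕ) : ℕ∞) < G.edist x.1 z.1 → f x z = 0) := by
  obtain ⟨f, hnn, hsum, hadj, hsupp⟩ := hunif
  have : Nonempty S := hS.to_subtype
  have hmin : ∀ w : V, ∃ s : S, ∀ t : S, G.edist w s.1 ≤ G.edist w t.1 :=
    fun w => Finite.exists_min fun s : S => G.edist w s.1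
  choose π hπ using hmin
  refine ⟨fun x z => ∑ w, if π w = z then f x.1 w else 0, ?_, ?_, ?_, ?_⟩
  · intro x z
    refine Finset.sum_nonneg fun w _ => ?_
    split_ifs
    exacts [hnn _ _, le_rfl]
  · intro x
    rw [Finset.sum_comm]
    simpa using hsum x.1
  · intro x y hxy
    refine le_trans ?_ (hadj x.1 y.1 hxy).le
    calc ∑ z, |(∑ w, if π w = z then f x.1 w else 0) - ∑ w, if π w = z then f y.1 w else 0|
        ≤ ∑ z, ∑ w, if π w = z then |f x.1 w - f y.1 w| else 0 := by
          refine Finset.sum_le_sum fun z _ => ?_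
          rw [← Finset.sum_sub_distrib]
          refine (Finset.abs_sum_le_sum_abs _ _).trans (Finset.sum_le_sum fun w _ => ?_)
          split_ifs <;> simp
      _ = ∑ w, |f x.1 w - f y.1 w| := by
          rw [Finset.sum_comm]
          simp
  · intro x z hz
    refine Finset.sum_eq_zero fun w _ => ?_
    split_ifs with h
    · refine hsupp _ _ (lt_of_not_ge fun hle => hz.not_ge ?_)
      subst h
      calc G.edist x.1 (π w).1 ≤ G.edist x.1 w + G.edist w (π w).1 := G.edist_triangle
        _ ≤ r + r := by
          refine add_le_add hle ((hπ w x).trans ?_)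
          rwa [SimpleGraph.edist_comm]
        _ = ((2 * r : ℕ) : ℕ∞) := by push_cast; ring
    · rfl
end
end

section
/- Let d ≥ 1, c ≥ 0 and N ≥ 1, and let G be a finite simple graph of maximum degree at most d. Suppose that for every nonempty subset S ⊆ V(G), the subgraph F of G induced on S contains a nonempty set L ⊆ S with |L| ≤ N and |∂_F(L)| ≤ c·|L|. Then there exists a set W of edges of G with |W| ≤ d·c·|V(G)| such that every connected component of the graph obtained from G by deleting the edges in W has at most N vertices. -/
/-!
The sets provided by the hypothesis are removed one after another. If `L` is the set found in the
remaining vertex set `S`, all edges between `L` and `S \ L` are deleted; each of them has an end in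
the inner boundary of `L`, so by the degree bound there are at most `d * c * |L|` of them
(`ncard_cut_le`). The sets `L` are disjoint, so summing over all steps gives `d * c * |V|`
(`exists_cut_edges`, by strong induction on `|S|`). Each vertex lies in exactly one of the removed
sets, and all edges leaving such a set are deleted at the latest when the set is removed. Hence a
component of the remaining graph is contained in a removed set and has at most `N` vertices.
-/

open scoped Classical symmDiff

noncomputable section

/-- Each edge between `L` and `S \ L` has an end in the inner boundary of `L`, and a vertex is the
end of at most `d` edges. -/
lemma ncard_cut_le {V : Type*} [Finite V] {G : SimpleGraph V} {d : ℕ} (hG : DegLE G d)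
    (S L : Set V) :
    {e | ∃ x ∈ L, ∃ y ∈ S \ L, G.Adj x y ∧ e = s(x, y)}.ncard
      ≤ d * (innerBoundary G S L).ncard := by
  have hsub : {e | ∃ x ∈ L, ∃ y ∈ S \ L, G.Adj x y ∧ e = s(x, y)} ⊆
      ⋃ x ∈ (innerBoundary G S L).toFinite.toFinset,
        (fun y => s(x, y)) '' G.neighborSet x := by
    rintro e ⟨x, hx, y, hy, hxy, rfl⟩
    simp only [Set.mem_iUnion, Set.Finite.mem_toFinset]
    exact ⟨x, ⟨hx, y, hy, hxy⟩, y, hxy, rfl⟩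
  calc _ ≤ _ := Set.ncard_le_ncard hsub (Set.toFinite _)
    _ ≤ _ := Finset.set_ncard_biUnion_le _ _
    _ ≤ ∑ x ∈ (innerBoundary G S L).toFinite.toFinset, d :=
        Finset.sum_le_sum fun x _ => (Set.ncard_image_le (Set.toFinite _)).trans (hG x)
    _ = d * (innerBoundary G S L).ncard := by
        rw [Finset.sum_const, smul_eq_mul, mul_comm, Set.ncard_eq_toFinset_card _ (Set.toFinite _)]

/-- The removal process run on the vertex set `S`: the deleted edges `W` isolate, within `S`, a set
of at most `N` vertices around every vertex of `S`. -/
lemma exists_cut_edges {V : Type*} [Finite V] {G : SimpleGraph V} {d N : ℕ} {c : ℝ}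
    (hG : DegLE G d)
    (h : ∀ S : Set V, S.Nonempty → ∃ L : Set V, L ⊆ S ∧ L.Nonempty ∧ L.ncard ≤ N ∧
      ((innerBoundary G S L).ncard : ℝ) ≤ c * (L.ncard : ℝ)) (S : Set V) :
    ∃ W ⊆ G.edgeSet, (W.ncard : ℝ) ≤ d * c * S.ncard ∧
      ∀ v ∈ S, ∃ L ⊆ S, v ∈ L ∧ L.ncard ≤ N ∧
        ∀ x ∈ L, ∀ y ∈ S \ L, G.Adj x y → s(x, y) ∈ W := by
  induction hn : S.ncard using Nat.strong_induction_on generalizing S with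
  | _ n ih =>
  subst hn
  rcases S.eq_empty_or_nonempty with rfl | hS
  · exact ⟨∅, by simp, by simp, by simp⟩
  obtain ⟨L, hLS, hLne, hLN, hLc⟩ := h S hS
  have hcard : (S \ L).ncard + L.ncard = S.ncard :=
    Set.ncard_sdiff_add_ncard_of_subset hLS (Set.toFinite _)
  have hLpos : 0 < L.ncard := (Set.ncard_pos (Set.toFinite _)).2 hLne
  obtain ⟨W, hWG, hWc, hW⟩ := ih (S \ L).ncard (by omega) (S \ L) rfl
  refine ⟨W ∪ {e | ∃ x ∈ L, ∃ y ∈ S \ L, G.Adj x y ∧ e = s(x, y)}, ?_, ?_, ?_⟩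
  · refine Set.union_subset hWG ?_
    rintro e ⟨x, -, y, -, hxy, rfl⟩
    exact hxy
  · have h1 : ((W ∪ {e | ∃ x ∈ L, ∃ y ∈ S \ L, G.Adj x y ∧ e = s(x, y)}).ncard : ℝ) ≤
        W.ncard + d * (innerBoundary G S L).ncard := by
      exact_mod_cast (Set.ncard_union_le _ _).trans (Nat.add_le_add_left (ncard_cut_le hG S L) _)
    have h2 : (d : ℝ) * (innerBoundary G S L).ncard ≤ d * (c * L.ncard) := by gcongr
    rw [← hcard]
    push_cast
    linarith
  · intro v hv
    by_cases hvL : v ∈ L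
    · exact ⟨L, hLS, hvL, hLN, fun x hx y hy hxy => Or.inr ⟨x, hx, y, hy, hxy, rfl⟩⟩
    · obtain ⟨L', hL'S, hvL', hL'N, hL'⟩ := hW v ⟨hv, hvL⟩
      refine ⟨L', hL'S.trans Set.sdiff_subset, hvL', hL'N, fun x hx y hy hxy => ?_⟩
      by_cases hyL : y ∈ L
      -- An edge back to `L` was already deleted when `L` was removed.
      · exact Or.inr ⟨y, hyL, x, hL'S hx, hxy.symm, Sym2.eq_swap⟩
      · exact Or.inl (hL' x hx y ⟨⟨hy.1, hyL⟩, hy.2⟩ hxy)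

/-- A set that no edge leaves contains the component of each of its vertices. -/
lemma supp_subset_of_closed {V : Type*} {H : SimpleGraph V} {L : Set V}
    (hL : ∀ x ∈ L, ∀ y, H.Adj x y → y ∈ L) {v : V} (hv : v ∈ L) :
    (H.connectedComponentMk v).supp ⊆ L := by
  intro u hu
  obtain ⟨p⟩ := (SimpleGraph.ConnectedComponent.exact hu).symm
  clear hu
  induction p with
  | nil => exact hv
  | cons hadj _ ih => exact ih (hL _ hv _ hadj)

/-- Iterated removal of small-boundary sets yields hyperfiniteness. -/
theorem removal_process (d N : ℕ) (hd : 1 ≤ d) (hN : 1 ≤ N) (c : ℝ) (hc : 0 ≤ c)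
    (V : Type) [Fintype V] (G : SimpleGraph V) (hG : DegLE G d)
    (h : ∀ S : Set V, S.Nonempty → ∃ L : Set V, L ⊆ S ∧ L.Nonempty ∧ L.ncard ≤ N ∧
      ((innerBoundary G S L).ncard : ℝ) ≤ c * (L.ncard : ℝ)) :
    ∃ W ⊆ G.edgeSet, ((W.ncard : ℝ) ≤ (d : ℝ) * c * (Nat.card V : ℝ)) ∧
      ∀ v : V, (((G.deleteEdges W).connectedComponentMk v).supp).ncard ≤ N := by
  obtain ⟨W, hWG, hWc, hW⟩ := exists_cut_edges hG h Set.univ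
  refine ⟨W, hWG, by simpa only [Set.ncard_univ] using hWc, fun v => ?_⟩
  obtain ⟨L, -, hvL, hLN, hL⟩ := hW v (Set.mem_univ v)
  refine (Set.ncard_le_ncard (supp_subset_of_closed (fun x hx y hxy => ?_) hvL)
    (Set.toFinite _)).trans hLN
  by_contra hy
  rw [SimpleGraph.deleteEdges_adj] at hxy
  exact hxy.2 (hL x hx y ⟨Set.mem_univ y, hy⟩ hxy.1)

end
end

section
/- Let ε > 0, K ≥ 1, d ≥ 1 and let G be a finite simple graph of maximum degree at most d that is strongly (ε,K)-hyperfinite. Then G is (4ε,K)-uniform: there exists a function f̃ assigning to each vertex x ∈ V(G) a probability measure f̃(x) on V(G) such that ‖f̃(x) − f̃(y)‖₁ < 4ε for every pair of adjacent vertices x, y, and f̃(x)(z) = 0 whenever d_G(x,z) > K. -/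
/-!
Fix a `K`-separator `Y` and send each vertex `x ∉ Y` to one chosen vertex of the component of
`G - Y` containing `x`, and each `x ∈ Y` to itself. This map `separatorRep G Y` moves vertices by
a distance at most `K`, since a component has at most `K` vertices
(`edist_separatorRep_le`), and it takes the same value at adjacent vertices which both avoid `Y`
(`separatorRep_eq_of_adj`). Let `f x` be the law of `separatorRep G Y x` for `Y` distributed
according to `μ`. For adjacent `x`, `y`, the coupling of `f x` and `f y` through the common `Y`
has unequal coordinates only when `x ∈ Y` or `y ∈ Y`, an event of probability less than `2 * ε`, so that
`‖f x - f y‖₁ < 4 * ε`.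
-/

open scoped Classical symmDiff

noncomputable section

/-- The representative of `x` relative to `Y`: the vertex `x` itself if `x ∈ Y`, and otherwise a
vertex of the component of `x` in `G - Y` which depends on that component only. -/
def separatorRep {V : Type*} (G : SimpleGraph V) (Y : Set V) (x : V) : V :=
  if h : x ∈ Y then x
  else (((G.induce Yᶜ).connectedComponentMk ⟨x, h⟩).nonempty_supp.some : V)

lemma separatorRep_eq_of_adj {V : Type*} (G : SimpleGraph V) {Y : Set V} {x y : V}
    (hxy : G.Adj x y) (hx : x ∉ Y) (hy : y ∉ Y) :
    separatorRep G Y x = separatorRep G Y y := by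
  have hadj : (G.induce Yᶜ).Adj ⟨x, hx⟩ ⟨y, hy⟩ := hxy
  have h : (G.induce Yᶜ).connectedComponentMk ⟨x, hx⟩ =
      (G.induce Yᶜ).connectedComponentMk ⟨y, hy⟩ :=
    SimpleGraph.ConnectedComponent.sound hadj.reachable
  simp only [separatorRep, dif_neg hx, dif_neg hy, h]

/-- Two vertices in a component of size `n` are joined by a path with at most `n` vertices. -/
lemma edist_le_ncard_supp {V : Type*} [Finite V] (G : SimpleGraph V) {u v : V}
    (h : G.Reachable u v) :
    G.edist u v ≤ ((G.connectedComponentMk u).supp.ncard : ℕ∞) := by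
  obtain ⟨p, hp⟩ := h.exists_isPath
  refine (SimpleGraph.edist_le p).trans ?_
  have hsub : (p.support.toFinset : Set V) ⊆ (G.connectedComponentMk u).supp := by
    intro w hw
    rw [List.coe_toFinset, Set.mem_ofPred_eq] at hw
    exact SimpleGraph.ConnectedComponent.sound (p.takeUntil w hw).reachable.symm
  have hle := Set.ncard_le_ncard hsub (Set.toFinite _)
  rw [Set.ncard_coe_finset, List.toFinset_card_of_nodup hp.support_nodup,
    SimpleGraph.Walk.length_support] at hle
  exact_mod_cast (Nat.le_succ _).trans hle

lemma edist_separatorRep_le {V : Type*} [Finite V] (G : SimpleGraph V) {K : ℕ} {Y : Set V}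
    (hY : IsSeparator G K Y) (x : V) : G.edist x (separatorRep G Y x) ≤ K := by
  by_cases hx : x ∈ Y
  · simp [separatorRep, hx]
  · set c := (G.induce Yᶜ).connectedComponentMk ⟨x, hx⟩ with hc
    have hrep : separatorRep G Y x = (c.nonempty_supp.some : V) := by
      simp only [separatorRep, dif_neg hx, hc]
    have hreach : (G.induce Yᶜ).Reachable ⟨x, hx⟩ c.nonempty_supp.some :=
      (SimpleGraph.ConnectedComponent.exact c.nonempty_supp.some_mem).symm
    have hle := (edist_le_ncard_supp _ hreach).trans
      (Nat.cast_le.mpr (hY ⟨x, hx⟩))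
    obtain ⟨p, hp⟩ := hreach.exists_walk_length_eq_edist
    rw [hrep]
    -- A shortest walk in the induced subgraph is also a walk in `G`.
    have hmap := SimpleGraph.edist_le (p.map (SimpleGraph.Embedding.induce Yᶜ).toHom)
    rw [SimpleGraph.Walk.length_map, hp] at hmap
    exact hmap.trans hle

/-- Strong hyperfiniteness implies Property A: a strongly `(ε,K)`-hyperfinite graph
is `(4ε,K)`-uniform. -/
theorem strongly_hyperfinite_implies_uniform (ε : ℝ) (hε : 0 < ε) (K d : ℕ)
    (hK : 1 ≤ K) (hd : 1 ≤ d)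
    (V : Type) [Fintype V] (G : SimpleGraph V) (hG : DegLE G d)
    (μ : Set V → ℝ) (hμ0 : ∀ Y, 0 ≤ μ Y)
    (hμsupp : ∀ Y : Set V, ¬ IsSeparator G K Y → μ Y = 0)
    (hμ1 : ∑ Y : Set V, μ Y = 1)
    (hμε : ∀ x : V, (∑ Y : Set V, if x ∈ Y then μ Y else 0) < ε) :
    IsUniform G (4 * ε) K := by
  refine ⟨fun x z => ∑ Y : Set V, if separatorRep G Y x = z then μ Y else 0, ?_, ?_, ?_, ?_⟩
  · intro x z
    exact Finset.sum_nonneg fun Y _ => by split_ifs <;> simp [hμ0]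
  · intro x
    rw [Finset.sum_comm]
    simpa using hμ1
  · intro x y hxy
    have hbound : ∀ Y : Set V,
        ∑ z, |(if separatorRep G Y x = z then μ Y else 0) -
          (if separatorRep G Y y = z then μ Y else 0)| ≤
        2 * ((if x ∈ Y then μ Y else 0) + (if y ∈ Y then μ Y else 0)) := by
      intro Y
      have h0 := hμ0 Y
      by_cases hY : x ∈ Y ∨ y ∈ Y
      · -- Each of the two point masses has total mass `μ Y`.
        have h1 : ∑ z, |(if separatorRep G Y x = z then μ Y else 0) -
            (if separatorRep G Y y = z then μ Y else 0)| ≤ μ Y + μ Y := by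
          calc _ ≤ ∑ z, ((if separatorRep G Y x = z then μ Y else 0) +
                (if separatorRep G Y y = z then μ Y else 0)) := by
                refine Finset.sum_le_sum fun z _ => ?_
                split_ifs <;> simp [abs_of_nonneg h0, h0]
            _ = μ Y + μ Y := by simp [Finset.sum_add_distrib]
        refine h1.trans ?_
        rcases hY with hY | hY <;> simp only [hY, if_true] <;> split_ifs <;> linarith
      · push Not at hY
        simp [separatorRep_eq_of_adj G hxy hY.1 hY.2, hY.1, hY.2]
    calc ∑ z, |(∑ Y : Set V, if separatorRep G Y x = z then μ Y else 0) -
          ∑ Y : Set V, if separatorRep G Y y = z then μ Y else 0|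
        ≤ ∑ z, ∑ Y : Set V, |(if separatorRep G Y x = z then μ Y else 0) -
          (if separatorRep G Y y = z then μ Y else 0)| := by
          refine Finset.sum_le_sum fun z _ => ?_
          rw [← Finset.sum_sub_distrib]
          exact Finset.abs_sum_le_sum_abs _ _
      _ = ∑ Y : Set V, ∑ z, |(if separatorRep G Y x = z then μ Y else 0) -
          (if separatorRep G Y y = z then μ Y else 0)| := Finset.sum_comm
      _ ≤ ∑ Y : Set V, 2 * ((if x ∈ Y then μ Y else 0) + (if y ∈ Y then μ Y else 0)) :=
          Finset.sum_le_sum fun Y _ => hbound Y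
      _ = 2 * ((∑ Y : Set V, if x ∈ Y then μ Y else 0) +
          ∑ Y : Set V, if y ∈ Y then μ Y else 0) := by
          rw [← Finset.mul_sum, Finset.sum_add_distrib]
      _ < 4 * ε := by linarith [hμε x, hμε y]
  · intro x z hz
    refine Finset.sum_eq_zero fun Y _ => ?_
    split_ifs with h
    · refine hμsupp Y fun hY => ?_
      exact absurd (h ▸ edist_separatorRep_le G hY x) (not_le.mpr hz)
    · rfl

end
end

section
/- Let d ≥ 1 and let P be a class of finite simple graphs of maximum degree at most d that is monotone (closed under taking subgraphs) and hyperfinite. Then for every ε > 0 there exists an integer r ≥ 1 such that every graph G ∈ P is (ε,r)-uniform. -/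
/-!
The proof passes through a weighted form of hyperfiniteness and a minimax argument.

*Weighted hyperfiniteness* (`weighted_hyperfinite`). For each nonnegative vertex weight `w` on a graph
of the class there is a vertex set of weight at most `ε · w(V)` whose removal leaves pieces of bounded
diameter. Vertices having a neighbour at least `M` times heavier have total weight at most
`(d / M) · w(V)`; once these are gone, the level `⌊log_M w⌋` changes by at most one along an edge.
Removing the lightest residue class of levels modulo `k` then separates the graph into blocks of
consecutive levels, in each of which the weights differ by a factor at most `M ^ k`. Each block
induces a graph of the class by monotonicity, so unweighted hyperfiniteness with parameter of order
`ε / M ^ k` finishes (`exists_weighted_cut`).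

*Minimax* (`exists_distribution`). If every probability distribution on such removable sets covered some
vertex with probability at least `ε`, a hyperplane would separate the convex hull of their
indicators from the open orthant `{v | ∀ x, v x < ε}`; its normal is a nonnegative weight violating
weighted hyperfiniteness. Hence there is a random removable set containing each vertex with
probability less than `ε`.

Sending `x` to the law of the representative of its piece gives the required measures: for an edge
`xy` the representatives differ only if `x` or `y` is removed (`isUniform_of_distribution`).
-/


open scoped Classical symmDiff

noncomputable section

/-! ### Cutting sets and hyperfinite cuts -/

/-- A vertex set `U` is `r`-*cutting* for `G` when there is a map `c` moving each vertex by distance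
at most `r` that is constant along every edge of `G` avoiding `U`. When every component of `G - U`
has at most `r` vertices, choosing a representative in each component gives such a `c`. -/
def IsCutting {V : Type*} (G : SimpleGraph V) (r : ℕ) (U : Set V) : Prop :=
  ∃ c : V → V, (∀ x, G.edist x (c x) ≤ r) ∧
    ∀ x y, G.Adj x y → x ∉ U → y ∉ U → c x = c y

/-- A path joining two vertices of a component visits each vertex of it at most once. -/
lemma edist_le_of_reachable {V : Type*} [Fintype V] (G : SimpleGraph V) (K : ℕ) (x y : V)
    (hK : (G.connectedComponentMk x).supp.ncard ≤ K) (h : G.Reachable x y) :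
    G.edist x y ≤ K := by
  obtain ⟨p, hp⟩ := h.exists_isPath
  refine p.edist_le.trans ?_
  have h1 : (p.support.toFinset : Set V) ⊆ (G.connectedComponentMk x).supp := by
    intro z hz
    simp only [List.coe_toFinset, Set.mem_ofPred_eq] at hz
    rw [SimpleGraph.ConnectedComponent.mem_supp_iff, SimpleGraph.ConnectedComponent.eq]
    exact (p.takeUntil z hz).reachable.symm
  have h2 := Set.ncard_le_ncard h1
  rw [Set.ncard_coe_finset, List.toFinset_card_of_nodup hp.support_nodup,
    SimpleGraph.Walk.length_support] at h2
  exact_mod_cast (by omega : p.length ≤ K)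

/-- Hyperfiniteness of the subgraph induced on `S`, with deleted edges replaced by one endpoint each
and the components replaced by representatives. -/
lemma exists_cut_of_induce {V : Type*} [Fintype V] (G : SimpleGraph V) (ε : ℝ) (K : ℕ) (S : Set V)
    (h : IsHyperfinite (G.induce S) ε K) :
    ∃ (U : Set V) (c : V → V), U ⊆ S ∧ (U.ncard : ℝ) ≤ ε * S.ncard ∧
      (∀ x, G.edist x (c x) ≤ K) ∧
      ∀ x y, G.Adj x y → x ∈ S → y ∈ S → x ∉ U → y ∉ U → c x = c y := by
  obtain ⟨W, hW, hWc, hcomp⟩ := h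
  set H := (G.induce S).deleteEdges W with hH
  have hle : ∀ x y : S, H.Reachable x y → G.edist (x : V) y ≤ K := by
    intro x y hxy
    have h1 := edist_le_of_reachable H K x y (hcomp x) hxy
    obtain ⟨p, hp⟩ := hxy.exists_walk_length_eq_edist
    let φ : H →g G := ⟨Subtype.val, fun {a b} hab => by
      rw [hH, SimpleGraph.deleteEdges_adj] at hab
      exact hab.1⟩
    calc G.edist (x : V) y ≤ (p.map φ).length := (p.map φ).edist_le
      _ = p.length := by rw [SimpleGraph.Walk.length_map]
      _ ≤ K := hp ▸ h1
  refine ⟨(fun e : Sym2 S => ((Quot.out e).1 : V)) '' W,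
    fun x => if hx : x ∈ S then ((H.connectedComponentMk ⟨x, hx⟩).out : S) else x, ?_, ?_, ?_, ?_⟩
  · rintro _ ⟨e, _, rfl⟩
    exact (Quot.out e).1.2
  · have h1 : ((fun e : Sym2 S => ((Quot.out e).1 : V)) '' W).ncard ≤ W.ncard :=
      Set.ncard_image_le (Set.toFinite _)
    have h2 : (((fun e : Sym2 S => ((Quot.out e).1 : V)) '' W).ncard : ℝ) ≤ W.ncard := by
      exact_mod_cast h1
    rw [← Nat.card_coe_set_eq S]
    exact h2.trans hWc
  · intro x
    by_cases hx : x ∈ S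
    · simp only [hx, dif_pos]
      apply hle ⟨x, hx⟩
      rw [← SimpleGraph.ConnectedComponent.eq]
      exact (Quot.out_eq _).symm
    · simp [hx]
  · intro x y hxy hx hy hxU hyU
    simp only [hx, hy, dif_pos]
    have : H.connectedComponentMk ⟨x, hx⟩ = H.connectedComponentMk ⟨y, hy⟩ := by
      rw [SimpleGraph.ConnectedComponent.eq]
      apply SimpleGraph.Adj.reachable
      rw [hH, SimpleGraph.deleteEdges_adj]
      refine ⟨hxy, fun hmem => ?_⟩
      have ho : s((Quot.out s((⟨x, hx⟩ : S), (⟨y, hy⟩ : S))).1,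
          (Quot.out s((⟨x, hx⟩ : S), (⟨y, hy⟩ : S))).2) = s((⟨x, hx⟩ : S), (⟨y, hy⟩ : S)) :=
        Quot.out_eq _
      rw [Sym2.eq_iff] at ho
      rcases ho with ho | ho
      · exact hxU ⟨_, hmem, congrArg Subtype.val ho.1⟩
      · exact hyU ⟨_, hmem, congrArg Subtype.val ho.1⟩
    rw [this]

/-! ### Weighted hyperfiniteness -/

/-- Adjacent integers lie in the same block of `k` consecutive integers unless one of them is a
multiple of `k`. -/
lemma ediv_eq_of_near {a b k : ℤ} (hk : 0 < k) (h1 : a ≤ b + 1) (h2 : b ≤ a + 1)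
    (ha : a % k ≠ 0) (hb : b % k ≠ 0) : a / k = b / k := by
  wlog hab : a ≤ b generalizing a b
  · exact (this h2 h1 hb ha (by omega)).symm
  rcases eq_or_lt_of_le hab with rfl | hlt
  · rfl
  have e : b = a + 1 := by omega
  have h3 := Int.emod_nonneg b hk.ne'
  have h4 := Int.emod_lt_of_pos b hk
  have h5 := Int.mul_ediv_add_emod b k
  have : a = (b % k - 1) + k * (b / k) := by omega
  rw [this, Int.add_mul_ediv_left _ _ hk.ne', Int.ediv_eq_zero_of_lt (by omega) (by omega)]
  simp

/-- The vertices with a neighbour at least `M` times heavier carry little weight, since each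
vertex is charged by at most `d` neighbours. -/
lemma sum_light_le {V : Type*} [Fintype V] (G : SimpleGraph V) (d : ℕ) (hd : DegLE G d)
    (w : V → ℝ) (hw : ∀ x, 0 ≤ w x) (M : ℝ) (hM : 0 < M) :
    ∑ x with ∃ y, G.Adj x y ∧ M * w x ≤ w y, w x ≤ d / M * ∑ x, w x := by
  have hpt : ∀ x ∈ Finset.univ.filter (fun x => ∃ y, G.Adj x y ∧ M * w x ≤ w y),
      w x ≤ ∑ y, if G.Adj x y then w y / M else 0 := by
    intro x hx
    obtain ⟨y, hxy, hy⟩ := (Finset.mem_filter.1 hx).2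
    have h0 : ∀ z ∈ Finset.univ, 0 ≤ (if G.Adj x z then w z / M else 0) := by
      intro z _
      have := hw z
      split_ifs <;> positivity
    calc w x ≤ w y / M := by rw [le_div_iff₀ hM]; linarith
      _ = if G.Adj x y then w y / M else 0 := by simp [hxy]
      _ ≤ _ := Finset.single_le_sum (f := fun z => if G.Adj x z then w z / M else 0) h0
        (Finset.mem_univ y)
  calc _ ≤ ∑ x with ∃ y, G.Adj x y ∧ M * w x ≤ w y, ∑ y, (if G.Adj x y then w y / M else 0) :=
        Finset.sum_le_sum hpt
    _ ≤ ∑ x, ∑ y, (if G.Adj x y then w y / M else 0) := by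
        apply Finset.sum_le_sum_of_subset_of_nonneg (Finset.filter_subset _ _)
        intro x _ _
        apply Finset.sum_nonneg
        intro y _
        have := hw y
        split_ifs <;> positivity
    _ = ∑ y, ∑ x, (if G.Adj x y then w y / M else 0) := Finset.sum_comm
    _ ≤ ∑ y, d / M * w y := by
        apply Finset.sum_le_sum
        intro y _
        rw [← Finset.sum_filter, Finset.sum_const, nsmul_eq_mul]
        have hc : (Finset.univ.filter (fun x => G.Adj x y)).card ≤ d := by
          refine le_trans (le_of_eq ?_) (hd y)
          rw [← Set.ncard_coe_finset]
          congr 1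
          ext x
          simp [G.adj_comm]
        have hc' : ((Finset.univ.filter (fun x => G.Adj x y)).card : ℝ) ≤ d := by exact_mod_cast hc
        have := hw y
        calc _ ≤ (d : ℝ) * (w y / M) := by gcongr
          _ = _ := by ring
    _ = _ := by rw [Finset.mul_sum]

/-- Some residue class of levels modulo `k` carries at most the average weight. -/
lemma exists_light_residue {V : Type*} [Fintype V] (w : V → ℝ) (l : V → ℤ) (k : ℕ) (hk : 0 < k) :
    ∃ j : ℤ, 0 ≤ j ∧ j < k ∧ ∑ x with l x % k = j, w x ≤ 1 / k * ∑ x, w x := by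
  have hkz : (0 : ℤ) < k := by exact_mod_cast hk
  have hsum : ∑ j ∈ Finset.Ico (0 : ℤ) k, ∑ x with l x % k = j, w x = ∑ x, w x := by
    apply Finset.sum_fiberwise_of_maps_to
    intro x _
    simp [Int.emod_nonneg _ hkz.ne', Int.emod_lt_of_pos _ hkz]
  have hk' : (k : ℝ) ≠ 0 := by positivity
  obtain ⟨j, hj, hle⟩ := Finset.exists_le_of_sum_le (s := Finset.Ico (0 : ℤ) k)
    (f := fun j => ∑ x with l x % k = j, w x) (g := fun _ => 1 / k * ∑ x, w x)
    ⟨0, by simp [hk]⟩ (by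
      rw [hsum, Finset.sum_const, nsmul_eq_mul]
      simp [hk'])
  rw [Finset.mem_Ico] at hj
  exact ⟨j, hj.1, hj.2, hle⟩

/-- A set that is sparse by count is sparse by weight, at the cost of the ratio `R` between the
largest and the smallest weight. -/
lemma sum_block_le {V : Type*} [Fintype V] (w : V → ℝ) (S U : Set V) (hUS : U ⊆ S)
    (η a R : ℝ) (hη : 0 ≤ η) (hR : 0 ≤ R) (ha : 0 ≤ a) (hc : (U.ncard : ℝ) ≤ η * S.ncard)
    (hlo : ∀ x ∈ S, a ≤ w x) (hhi : ∀ x ∈ S, w x ≤ a * R) :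
    ∑ x with x ∈ U, w x ≤ η * R * ∑ x with x ∈ S, w x := by
  have hcard : ∀ T : Set V, ((Finset.univ.filter (· ∈ T)).card : ℝ) = T.ncard := by
    intro T
    rw [← Set.ncard_coe_finset]
    simp
  have h1 : ∑ x with x ∈ U, w x ≤ U.ncard * (a * R) := by
    rw [← hcard, ← nsmul_eq_mul]
    exact Finset.sum_le_card_nsmul _ _ _ fun x hx => hhi x (hUS (Finset.mem_filter.1 hx).2)
  have h2 : S.ncard * a ≤ ∑ x with x ∈ S, w x := by
    rw [← hcard, ← nsmul_eq_mul]
    exact Finset.card_nsmul_le_sum _ _ _ fun x hx => hlo x (Finset.mem_filter.1 hx).2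
  calc _ ≤ U.ncard * (a * R) := h1
    _ ≤ η * S.ncard * (a * R) := by gcongr
    _ = η * R * (S.ncard * a) := by ring
    _ ≤ _ := by gcongr

/-- The cut for a single graph and weight, made of four parts: vertices of weight zero, light
neighbours of heavy vertices, a residue class of levels, and a hyperfinite cut in each remaining
block of `k` consecutive levels. -/
lemma exists_weighted_cut {V : Type*} [Fintype V] (G : SimpleGraph V) (d : ℕ) (hd : DegLE G d)
    (w : V → ℝ) (hw : ∀ x, 0 ≤ w x) (M k K : ℕ) (hM : 1 < M) (hk : 0 < k) (η : ℝ) (hη : 0 ≤ η)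
    (hyp : ∀ S : Set V, IsHyperfinite (G.induce S) η K) :
    ∃ U : Set V, IsCutting G K U ∧
      ∑ x with x ∈ U, w x ≤ (d / M + 1 / k + η * M ^ k) * ∑ x, w x := by
  have hMr : (0 : ℝ) < M := by exact_mod_cast (by omega : 0 < M)
  have hM1 : (1 : ℝ) < M := by exact_mod_cast hM
  have hkz : (0 : ℤ) < k := by exact_mod_cast hk
  -- `Int.log` is `0` at weight `0`; such vertices are removed separately and kept out of the blocks.
  let l : V → ℤ := fun x => Int.log M (w x)
  obtain ⟨j, hj0, hjk, hj⟩ := exists_light_residue w l k hk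
  let b : V → ℤ := fun x => (l x - j) / k
  obtain ⟨S, hS⟩ : ∃ S : ℤ → Set V, ∀ t x, x ∈ S t ↔ 0 < w x ∧ b x = t :=
    ⟨fun t => {x | 0 < w x ∧ b x = t}, fun _ _ => Iff.rfl⟩
  choose U c hUS hUc hc hcU using fun t => exists_cut_of_induce G η K (S t) (hyp (S t))
  have hblock : ∀ t, ∑ x with x ∈ U t, w x ≤ η * M ^ k * ∑ x with x ∈ S t, w x := by
    intro t
    refine sum_block_le w (S t) (U t) (hUS t) η ((M : ℝ) ^ (j + k * t)) (M ^ k) hη (by positivity)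
      (by positivity) (hUc t) ?_ ?_
    · intro x hxS
      obtain ⟨hx, hbx⟩ := (hS t x).1 hxS
      refine le_trans ?_ (Int.zpow_log_le_self hM hx)
      apply zpow_le_zpow_right₀ hM1.le
      have h5 := Int.mul_ediv_add_emod (l x - j) k
      have h3 := Int.emod_nonneg (l x - j) hkz.ne'
      have : (l x - j) / k = t := hbx
      rw [this] at h5
      change _ ≤ l x
      linarith
    · intro x hxS
      obtain ⟨hx, hbx⟩ := (hS t x).1 hxS
      refine (Int.lt_zpow_succ_log_self hM (w x)).le.trans ?_
      rw [← zpow_natCast, ← zpow_add₀ hMr.ne']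
      apply zpow_le_zpow_right₀ hM1.le
      have h5 := Int.mul_ediv_add_emod (l x - j) k
      have h3 := Int.emod_lt_of_pos (l x - j) hkz
      have : (l x - j) / k = t := hbx
      rw [this] at h5
      change l x + 1 ≤ _
      linarith
  have hU4 : ∑ x with x ∈ U (b x), w x ≤ η * M ^ k * ∑ x, w x := by
    have hmaps : ∀ s : Finset V, ∀ x ∈ s, b x ∈ Finset.univ.image b := fun s x _ =>
      Finset.mem_image_of_mem b (Finset.mem_univ x)
    rw [← Finset.sum_fiberwise_of_maps_to (hmaps _),
      ← Finset.sum_fiberwise_of_maps_to (hmaps Finset.univ), Finset.mul_sum]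
    apply Finset.sum_le_sum
    intro t _
    have e1 : ∑ x ∈ Finset.univ.filter (fun x => x ∈ U (b x)) with b x = t, w x
        ≤ ∑ x with x ∈ U t, w x := by
      apply Finset.sum_le_sum_of_subset_of_nonneg _ fun x _ _ => hw x
      intro x hx
      simp only [Finset.mem_filter, Finset.mem_univ, true_and] at hx ⊢
      rw [← hx.2]
      exact hx.1
    have e2 : ∑ x with x ∈ S t, w x ≤ ∑ x with b x = t, w x := by
      apply Finset.sum_le_sum_of_subset_of_nonneg _ fun x _ _ => hw x
      intro x hx
      simp only [Finset.mem_filter, Finset.mem_univ, true_and] at hx ⊢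
      exact ((hS t x).1 hx).2
    exact e1.trans ((hblock t).trans (by gcongr))
  have hlight := sum_light_le G d hd w hw M hMr
  let D1 : Finset V := Finset.univ.filter fun x => w x = 0
  let D2 : Finset V := Finset.univ.filter fun x => ∃ y, G.Adj x y ∧ M * w x ≤ w y
  let D3 : Finset V := Finset.univ.filter fun x => l x % k = j
  let D4 : Finset V := Finset.univ.filter fun x => x ∈ U (b x)
  refine ⟨((D1 ∪ D2 ∪ D3 ∪ D4 : Finset V) : Set V), ⟨fun x => c (b x) x, fun x => hc _ x, ?_⟩, ?_⟩
  · intro x y hxy hx hy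
    simp only [D1, D2, D3, D4, Finset.coe_union, Set.mem_union, Finset.mem_coe, Finset.mem_filter,
      Finset.mem_univ, true_and, not_or, not_exists, not_and, not_le] at hx hy
    obtain ⟨⟨⟨x1, x2⟩, x3⟩, x4⟩ := hx
    obtain ⟨⟨⟨y1, y2⟩, y3⟩, y4⟩ := hy
    have hx0 : 0 < w x := lt_of_le_of_ne (hw x) (Ne.symm x1)
    have hy0 : 0 < w y := lt_of_le_of_ne (hw y) (Ne.symm y1)
    have hlog : ∀ u v, 0 < w v → w v < M * w u → l v ≤ l u + 1 := by
      intro u v hv huv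
      have : w v < (M : ℝ) ^ (l u + 2) := by
        calc w v < M * w u := huv
          _ ≤ M * (M : ℝ) ^ (l u + 1) := by
            gcongr
            exact (Int.lt_zpow_succ_log_self hM (w u)).le
          _ = (M : ℝ) ^ (l u + 2) := by
            rw [show l u + 2 = 1 + (l u + 1) by ring, zpow_add₀ hMr.ne' 1, zpow_one]
      have := (Int.lt_zpow_iff_log_lt hM hv).1 this
      change Int.log M (w v) ≤ _
      omega
    have hne : ∀ u, l u % k ≠ j → (l u - j) % k ≠ 0 := by
      intro u hu h0
      apply hu
      rw [← Int.emod_eq_emod_iff_emod_sub_eq_zero] at h0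
      rw [h0, Int.emod_eq_of_lt hj0 hjk]
    have l1 := hlog x y hy0 (x2 y hxy)
    have l2 := hlog y x hx0 (y2 x hxy.symm)
    have hb : b x = b y :=
      ediv_eq_of_near hkz (by omega) (by omega) (hne x x3) (hne y y3)
    change c (b x) x = c (b y) y
    rw [← hb] at y4 ⊢
    exact hcU (b x) x y hxy ((hS _ x).2 ⟨hx0, rfl⟩) ((hS _ y).2 ⟨hy0, hb.symm⟩) x4 y4
  · have hunion : ∀ A B : Finset V, ∑ x ∈ A ∪ B, w x ≤ ∑ x ∈ A, w x + ∑ x ∈ B, w x := by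
      intro A B
      rw [← Finset.sum_union_inter]
      exact le_add_of_nonneg_right (Finset.sum_nonneg fun x _ => hw x)
    have hD1 : ∑ x ∈ D1, w x = 0 := Finset.sum_eq_zero fun x hx => (Finset.mem_filter.1 hx).2
    refine (le_of_eq (Finset.sum_congr (s₂ := D1 ∪ D2 ∪ D3 ∪ D4) ?_ fun _ _ => rfl)).trans ?_
    · ext x
      simp only [Finset.mem_filter, Finset.mem_univ, true_and, Finset.mem_coe]
    have a1 := hunion (D1 ∪ D2 ∪ D3) D4
    have a2 := hunion (D1 ∪ D2) D3
    have a3 := hunion D1 D2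
    have a4 : ∑ x ∈ D2, w x ≤ d / M * ∑ x, w x := hlight
    have a5 : ∑ x ∈ D3, w x ≤ 1 / k * ∑ x, w x := hj
    have a6 : ∑ x ∈ D4, w x ≤ η * M ^ k * ∑ x, w x := hU4
    rw [add_mul, add_mul]
    linarith

/-- Weighted hyperfiniteness, with `r` independent of the graph and of the weights. -/
lemma weighted_hyperfinite (d : ℕ) (P : GraphClass)
    (hPdeg : ∀ (V : Type) [Fintype V] (G : SimpleGraph V), P V G → DegLE G d)
    (hmono : P.Mono) (hhyp : P.Hyperfinite) (ε : ℝ) (hε : 0 < ε) :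
    ∃ r : ℕ, 1 ≤ r ∧ ∀ (V : Type) [Fintype V] (G : SimpleGraph V), P V G →
      ∀ w : V → ℝ, (∀ x, 0 ≤ w x) →
        ∃ U : Set V, IsCutting G r U ∧ ∑ x with x ∈ U, w x ≤ ε * ∑ x, w x := by
  -- `M`, `k` and the hyperfiniteness parameter make each of the three costs at most `ε / 3`.
  obtain ⟨m, hm⟩ := exists_nat_gt (3 * d / ε)
  obtain ⟨k, hk⟩ := exists_nat_gt (3 / ε)
  have hkr : (0 : ℝ) < k := lt_trans (by positivity) hk
  have hk0 : 0 < k := by exact_mod_cast hkr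
  let M := m + 2
  have hMr : (0 : ℝ) < (M : ℕ) := by positivity
  have hMm : (m : ℝ) ≤ (M : ℕ) := by simp [M]
  obtain ⟨K, hK1, hK⟩ := hhyp (ε / 3 / (M : ℕ) ^ k) (by positivity)
  refine ⟨K, hK1, fun V _ G hG w hw => ?_⟩
  obtain ⟨U, hU, hle⟩ := exists_weighted_cut G d (hPdeg V G hG) w hw M k K (by omega) hk0
    (ε / 3 / (M : ℕ) ^ k) (by positivity) fun S => hK S (G.induce S)
      (hmono V S G (G.induce S) (Function.Embedding.subtype _) (fun a b h => h) hG)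
  refine ⟨U, hU, hle.trans ?_⟩
  have h1 : (d : ℝ) / (M : ℕ) ≤ ε / 3 := by
    rw [div_lt_iff₀ hε] at hm
    rw [div_le_iff₀ hMr]
    nlinarith
  have h2 : 1 / (k : ℝ) ≤ ε / 3 := by
    rw [div_lt_iff₀ hε] at hk
    rw [div_le_iff₀ hkr]
    linarith
  have h3 : ε / 3 / ((M : ℕ) : ℝ) ^ k * ((M : ℕ) : ℝ) ^ k = ε / 3 := by
    field_simp
  have h0 : 0 ≤ ∑ x, w x := Finset.sum_nonneg fun x _ => hw x
  gcongr
  linarith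

/-! ### Minimax and the uniform measures -/

/-- Minimax: a family of sets that, for each nonnegative weight, has a member of relative weight
at most `ε / 2` supports a probability distribution covering each point with probability
less than `ε`. -/
lemma exists_distribution {V : Type*} [Fintype V] (Q : Set V → Prop) (ε : ℝ) (hε : 0 < ε)
    (h : ∀ w : V → ℝ, (∀ x, 0 ≤ w x) → ∃ U, Q U ∧ ∑ x with x ∈ U, w x ≤ ε / 2 * ∑ x, w x) :
    ∃ (ι : Type) (_ : Fintype ι) (p : ι → ℝ) (U : ι → Set V), (∀ i, 0 ≤ p i) ∧ ∑ i, p i = 1 ∧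
      (∀ i, Q (U i)) ∧ ∀ x, ∑ i, p i * (if x ∈ U i then 1 else 0) < ε := by
  let ind : Set V → V → ℝ := fun U x => if x ∈ U then 1 else 0
  let A : Set (V → ℝ) := Set.pi Set.univ fun _ => Set.Iio ε
  have hAo : IsOpen A := isOpen_set_pi Set.finite_univ fun _ _ => isOpen_Iio
  have hAc : Convex ℝ A := convex_pi fun _ _ => convex_Iio ε
  let B : Set (V → ℝ) := convexHull ℝ (ind '' {U | Q U})
  by_cases hdisj : Disjoint A B
  · exfalso
    obtain ⟨f, u, hfA, hfB⟩ := geometric_hahn_banach_open hAc hAo (convex_convexHull ℝ _) hdisj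
    let w : V → ℝ := fun x => f (Pi.single x 1)
    have hf : ∀ v : V → ℝ, f v = ∑ x, v x * w x := by
      intro v
      conv_lhs => rw [pi_eq_sum_univ' v]
      rw [map_sum]
      refine Finset.sum_congr rfl fun x _ => ?_
      rw [map_smul, smul_eq_mul]
    have hw : ∀ x, 0 ≤ w x := by
      intro x
      by_contra! hneg
      -- Moving far in the direction `-e_x` stays inside `A` but makes `f` arbitrarily large.
      have h1 := hfA (-((|u| + 1) / (-w x)) • Pi.single x 1) (by
        intro y _
        have h2 : 0 ≤ (|u| + 1) / (-w x) := div_nonneg (by positivity) (by linarith)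
        have h3 : (0 : ℝ) ≤ (Pi.single x 1 : V → ℝ) y := by
          by_cases hxy : y = x
          · subst hxy; simp
          · simp [hxy]
        simp only [Pi.smul_apply, smul_eq_mul, Set.mem_Iio]
        nlinarith [mul_nonneg h2 h3])
      rw [map_smul, smul_eq_mul] at h1
      change -((|u| + 1) / (-w x)) * w x < u at h1
      have h4 : -((|u| + 1) / (-w x)) * w x = |u| + 1 := by
        field_simp [hneg.ne]
      rw [h4] at h1
      linarith [le_abs_self u]
    obtain ⟨U, hQ, hU⟩ := h w hw
    have h1 := hfA (fun _ => ε / 2) (fun _ _ => by simp only [Set.mem_Iio]; linarith)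
    have h2 := hfB (ind U) (subset_convexHull ℝ _ ⟨U, hQ, rfl⟩)
    rw [hf, ← Finset.mul_sum] at h1
    rw [hf] at h2
    simp only [ind, ite_mul, one_mul, zero_mul] at h2
    rw [← Finset.sum_filter] at h2
    linarith
  · obtain ⟨v, hvA, hvB⟩ := Set.not_disjoint_iff.1 hdisj
    obtain ⟨ι, hι, p, z, hp0, hp1, hz, hv⟩ := mem_convexHull_iff_exists_fintype.1 hvB
    choose U hQ hUz using hz
    refine ⟨ι, hι, p, U, hp0, hp1, hQ, fun x => ?_⟩
    have h1 : v x < ε := hvA x (Set.mem_univ x)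
    rw [← hv, Finset.sum_apply] at h1
    refine lt_of_eq_of_lt (Finset.sum_congr rfl fun i _ => ?_) h1
    rw [Pi.smul_apply, smul_eq_mul, ← hUz i]

/-- With random index `i` of law `p`, the measure at `x` is the law of the representative `c i x`;
for adjacent `x`, `y` these differ only when `x` or `y` lies in `U i`. -/
lemma isUniform_of_distribution {V : Type*} [Fintype V] (G : SimpleGraph V) (r : ℕ) (ε : ℝ)
    {ι : Type} [Fintype ι] (p : ι → ℝ) (U : ι → Set V) (hp0 : ∀ i, 0 ≤ p i)
    (hp1 : ∑ i, p i = 1) (hU : ∀ i, IsCutting G r (U i))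
    (hx : ∀ x, ∑ i, p i * (if x ∈ U i then 1 else 0) < ε / 4) : IsUniform G ε r := by
  choose c hc hcU using hU
  refine ⟨fun x z => ∑ i, p i * (if z = c i x then 1 else 0), ?_, ?_, ?_, ?_⟩
  · intro x z
    refine Finset.sum_nonneg fun i _ => mul_nonneg (hp0 i) ?_
    split_ifs <;> norm_num
  · intro x
    rw [Finset.sum_comm]
    simp [hp1]
  · intro x y hxy
    have hpt : ∀ i, ∑ z, |(if z = c i x then (1 : ℝ) else 0) - (if z = c i y then 1 else 0)| ≤
        2 * ((if x ∈ U i then 1 else 0) + (if y ∈ U i then 1 else 0)) := by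
      intro i
      by_cases h : x ∉ U i ∧ y ∉ U i
      · rw [hcU i x y hxy h.1 h.2]
        simp [h.1, h.2]
      · have h1 : ∑ z, |(if z = c i x then (1 : ℝ) else 0) - (if z = c i y then 1 else 0)| ≤ 2 := by
          calc _ ≤ ∑ z, ((if z = c i x then (1 : ℝ) else 0) + (if z = c i y then 1 else 0)) := by
                refine Finset.sum_le_sum fun z _ => ?_
                split_ifs <;> norm_num
            _ = 2 := by
                rw [Finset.sum_add_distrib]
                simp
                norm_num
        refine h1.trans ?_
        by_cases h2 : x ∈ U i <;> by_cases h3 : y ∈ U i <;> simp_all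
    calc _ ≤ ∑ z, ∑ i, p i *
          |(if z = c i x then (1 : ℝ) else 0) - (if z = c i y then 1 else 0)| := by
          refine Finset.sum_le_sum fun z _ => ?_
          rw [← Finset.sum_sub_distrib]
          refine (Finset.abs_sum_le_sum_abs _ _).trans (le_of_eq ?_)
          refine Finset.sum_congr rfl fun i _ => ?_
          rw [← mul_sub, abs_mul, abs_of_nonneg (hp0 i)]
      _ = ∑ i, p i * ∑ z, |(if z = c i x then (1 : ℝ) else 0) - (if z = c i y then 1 else 0)| := by
          rw [Finset.sum_comm]
          simp only [Finset.mul_sum]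
      _ ≤ ∑ i, p i * (2 * ((if x ∈ U i then 1 else 0) + (if y ∈ U i then 1 else 0))) :=
          Finset.sum_le_sum fun i _ => mul_le_mul_of_nonneg_left (hpt i) (hp0 i)
      _ = 2 * (∑ i, p i * (if x ∈ U i then 1 else 0)) +
          2 * ∑ i, p i * (if y ∈ U i then 1 else 0) := by
          rw [Finset.mul_sum, Finset.mul_sum, ← Finset.sum_add_distrib]
          exact Finset.sum_congr rfl fun i _ => by ring
      _ < ε := by linarith [hx x, hx y]
  · intro x z hz
    refine Finset.sum_eq_zero fun i _ => ?_
    have : z ≠ c i x := fun h => absurd (hc i x) (by rw [← h]; exact not_le.2 hz)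
    simp [this]

/-- Monotone hyperfinite classes have Property A. -/
theorem monotone_hyperfinite_propertyA (d : ℕ) (hd : 1 ≤ d) (P : GraphClass)
    (hPdeg : ∀ (V : Type) [Fintype V] (G : SimpleGraph V), P V G → DegLE G d)
    (hmono : P.Mono) (hhyp : P.Hyperfinite) :
    ∀ ε : ℝ, 0 < ε → ∃ r : ℕ, 1 ≤ r ∧
      ∀ (V : Type) [Fintype V] (G : SimpleGraph V), P V G → IsUniform G ε r := by
  intro ε hε
  obtain ⟨r, hr, h⟩ := weighted_hyperfinite d P hPdeg hmono hhyp (ε / 4 / 2) (by positivity)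
  refine ⟨r, hr, fun V _ G hG => ?_⟩
  obtain ⟨ι, _, p, U, hp0, hp1, hQ, hx⟩ :=
    exists_distribution (IsCutting G r) (ε / 4) (by positivity) (h V G hG)
  exact isUniform_of_distribution G r ε p U hp0 hp1 hQ hx

end
end
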